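/- Let τ₁, τ₂ : ℝ² → ℝ (coordinates (x,y)) be smooth and everywhere positive, satisfying the bilinear Bäcklund relation τ₁∂_x²τ₂ − 2(∂_xτ₁)(∂_xτ₂) + τ₂∂_x²τ₁ + τ₂∂_yτ₁ − τ₁∂_yτ₂ = 0. Set u₁ := 2∂_x² log τ₁, u₂ := 2∂_x² log τ₂ and h := τ₂/τ₁. Then (∂_y − ∂_x²)h = h·u₁ and (∂_y + ∂_x²)(h⁻¹) = −h⁻¹·u₂. -/

import Mathlib

/-!
In Hirota's notation `D f·g = f' g - f g'` and `D² f·g = f'' g - 2 f' g' + f g''`, the bilinear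
relation reads `(D_x² + D_y) τ₁·τ₂ = 0`. Since `D² f·(h f) = f² h'' + h D² f·f` and
`D² f·f = 2 f² (log f)''`, dividing `D_x² τ₁·τ₂` by `τ₁²` gives `h_xx + h u₁` for `h = τ₂ / τ₁`,
whereas `D_y τ₁·τ₂` contributes `-h_y`. Exchanging the roles of `τ₁` and `τ₂` fixes `D_x²` and
changes the sign of `D_y`, hence the adjoint equation for `h⁻¹ = τ₁ / τ₂`.
-/

noncomputable def pX (f : ℝ → ℝ → ℝ) : ℝ → ℝ → ℝ :=
  fun x y => deriv (fun s => f s y) x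

noncomputable def pY (f : ℝ → ℝ → ℝ) : ℝ → ℝ → ℝ :=
  fun x y => deriv (fun s => f x s) y

open Filter Topology

theorem deriv_deriv_mul {𝕜 𝔸 : Type*} [NontriviallyNormedField 𝕜] [NormedRing 𝔸]
    [NormedAlgebra 𝕜 𝔸] {f g : 𝕜 → 𝔸} {x : 𝕜} (hf : ContDiffAt 𝕜 2 f x)
    (hg : ContDiffAt 𝕜 2 g x) :
    deriv (deriv (f * g)) x =
      f x * deriv (deriv g) x + 2 * deriv f x * deriv g x + deriv (deriv f) x * g x :=
  calc deriv (deriv (f * g)) x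
    _ = iteratedDeriv 2 (f * g) x := by rw [iteratedDeriv_succ, iteratedDeriv_one]
    _ = ∑ i ∈ .range 3, Nat.choose 2 i * iteratedDeriv i f x * iteratedDeriv (2 - i) g x :=
      iteratedDeriv_mul hf hg
    _ = f x * deriv (deriv g) x + 2 * deriv f x * deriv g x + deriv (deriv f) x * g x := by
      simp [Finset.sum_range_succ, iteratedDeriv_succ]

section Hirota

variable {𝕜 𝕜' : Type*} [NontriviallyNormedField 𝕜] [NontriviallyNormedField 𝕜']
  [NormedAlgebra 𝕜 𝕜'] {f g h : 𝕜 → 𝕜'} {x : 𝕜}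

/-- The first-order Hirota bilinear derivative `D f·g`. It measures the derivative of `f / g` and
expresses the `y`-part of the bilinear Bäcklund relation. -/
noncomputable def hirotaDeriv (f g : 𝕜 → 𝕜') (x : 𝕜) : 𝕜' :=
  deriv f x * g x - f x * deriv g x

/-- The second-order Hirota bilinear derivative `D² f·g`. It expresses the `x`-part of the bilinear
Bäcklund relation. -/
noncomputable def hirotaDeriv₂ (f g : 𝕜 → 𝕜') (x : 𝕜) : 𝕜' :=
  deriv (deriv f) x * g x - 2 * (deriv f x * deriv g x) + f x * deriv (deriv g) x

theorem hirotaDeriv_swap (f g : 𝕜 → 𝕜') (x : 𝕜) : hirotaDeriv g f x = -hirotaDeriv f g x := by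
  unfold hirotaDeriv
  ring

theorem hirotaDeriv₂_comm (f g : 𝕜 → 𝕜') (x : 𝕜) : hirotaDeriv₂ f g x = hirotaDeriv₂ g f x := by
  unfold hirotaDeriv₂
  ring

theorem hirotaDeriv₂_congr_right (hgh : g =ᶠ[𝓝 x] h) :
    hirotaDeriv₂ f g x = hirotaDeriv₂ f h x := by
  simp only [hirotaDeriv₂, hgh.eq_of_nhds, hgh.deriv_eq, hgh.deriv.deriv_eq]

theorem deriv_div_eq_hirotaDeriv (hf : DifferentiableAt 𝕜 f x) (hg : DifferentiableAt 𝕜 g x)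
    (hx : g x ≠ 0) : deriv (f / g) x = hirotaDeriv f g x / g x ^ 2 :=
  deriv_div hf hg hx

theorem hirotaDeriv₂_self (hf : DifferentiableAt 𝕜 f x) (hf' : DifferentiableAt 𝕜 (deriv f) x)
    (hx : f x ≠ 0) : hirotaDeriv₂ f f x = f x ^ 2 * (2 * deriv (logDeriv f) x) := by
  rw [logDeriv, deriv_div hf' hf hx, hirotaDeriv₂]
  field_simp
  ring

theorem hirotaDeriv₂_mul_right (hh : ContDiffAt 𝕜 2 h x) (hf : ContDiffAt 𝕜 2 f x) :
    hirotaDeriv₂ f (h * f) x = f x ^ 2 * deriv (deriv h) x + h x * hirotaDeriv₂ f f x := by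
  have hh' : DifferentiableAt 𝕜 h x := hh.differentiableAt two_ne_zero
  have hf' : DifferentiableAt 𝕜 f x := hf.differentiableAt two_ne_zero
  simp only [hirotaDeriv₂, deriv_deriv_mul hh hf, deriv_mul hh' hf', Pi.mul_apply]
  ring

theorem deriv_deriv_div_add_logDeriv (hf : ContDiffAt 𝕜 2 f x) (hg : ContDiffAt 𝕜 2 g x)
    (hx : f x ≠ 0) :
    deriv (deriv (g / f)) x + g x / f x * (2 * deriv (logDeriv f) x) =
      hirotaDeriv₂ f g x / f x ^ 2 := by
  have hquot : ContDiffAt 𝕜 2 (g / f) x := by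
    rw [div_eq_mul_inv]
    exact hg.mul (hf.inv hx)
  have hcancel : g / f * f =ᶠ[𝓝 x] g := by
    filter_upwards [hf.continuousAt.eventually_ne hx] with s hs
    exact div_mul_cancel₀ (g s) hs
  have hf' : DifferentiableAt 𝕜 (deriv f) x :=
    (hf.derivWithin (m := 1) (by norm_num)).differentiableAt one_ne_zero
  rw [eq_div_iff (pow_ne_zero 2 hx), ← hirotaDeriv₂_congr_right hcancel,
    hirotaDeriv₂_mul_right hquot hf, hirotaDeriv₂_self (hf.differentiableAt two_ne_zero) hf' hx,
    Pi.div_apply]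
  ring

end Hirota

section Slice

variable {𝕜 E F G : Type*} [NontriviallyNormedField 𝕜] [NormedAddCommGroup E] [NormedSpace 𝕜 E]
  [NormedAddCommGroup F] [NormedSpace 𝕜 F] [NormedAddCommGroup G] [NormedSpace 𝕜 G]
  {n : WithTop ℕ∞} {f : E → F → G}

theorem contDiff_slice_left (hf : ContDiff 𝕜 n fun p : E × F => f p.1 p.2) (y : F) :
    ContDiff 𝕜 n (f · y) :=
  hf.comp (contDiff_prodMk_left y)

theorem contDiff_slice_right (hf : ContDiff 𝕜 n fun p : E × F => f p.1 p.2) (x : E) :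
    ContDiff 𝕜 n (f x) :=
  hf.comp (contDiff_prodMk_right x)

end Slice

theorem deriv_log_comp_eventuallyEq_logDeriv {f : ℝ → ℝ} {x : ℝ} (hf : ContDiffAt ℝ 1 f x)
    (hx : f x ≠ 0) : deriv (Real.log ∘ f) =ᶠ[𝓝 x] logDeriv f := by
  filter_upwards [hf.eventually (by simp), hf.continuousAt.eventually_ne hx] with s hfs hs
  exact Real.deriv_log_comp_eq_logDeriv (hfs.differentiableAt one_ne_zero) hs

theorem deriv_deriv_div_add_log {f g : ℝ → ℝ} {x : ℝ} (hf : ContDiffAt ℝ 2 f x)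
    (hg : ContDiffAt ℝ 2 g x) (hx : f x ≠ 0) :
    deriv (deriv (g / f)) x + g x / f x * (2 * deriv (deriv (Real.log ∘ f)) x) =
      hirotaDeriv₂ f g x / f x ^ 2 := by
  rw [(deriv_log_comp_eventuallyEq_logDeriv (hf.of_le one_le_two) hx).deriv_eq,
    deriv_deriv_div_add_logDeriv hf hg hx]

section Backlund

variable {τ₁ τ₂ : ℝ → ℝ → ℝ} {x y : ℝ}

theorem pY_div_sub_pX_pX_div (h₁x : ContDiffAt ℝ 2 (τ₁ · y) x) (h₂x : ContDiffAt ℝ 2 (τ₂ · y) x)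
    (h₁y : DifferentiableAt ℝ (τ₁ x) y) (h₂y : DifferentiableAt ℝ (τ₂ x) y) (h₁ : τ₁ x y ≠ 0) :
    pY (fun a b => τ₂ a b / τ₁ a b) x y - pX (pX fun a b => τ₂ a b / τ₁ a b) x y
      = τ₂ x y / τ₁ x y * (2 * pX (pX fun a b => Real.log (τ₁ a b)) x y)
        - (hirotaDeriv₂ (τ₁ · y) (τ₂ · y) x + hirotaDeriv (τ₁ x) (τ₂ x) y) / τ₁ x y ^ 2 := by
  have hX : pX (pX fun a b => τ₂ a b / τ₁ a b) x y
        + τ₂ x y / τ₁ x y * (2 * pX (pX fun a b => Real.log (τ₁ a b)) x y)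
      = hirotaDeriv₂ (τ₁ · y) (τ₂ · y) x / τ₁ x y ^ 2 :=
    deriv_deriv_div_add_log h₁x h₂x h₁
  have hY : pY (fun a b => τ₂ a b / τ₁ a b) x y = -hirotaDeriv (τ₁ x) (τ₂ x) y / τ₁ x y ^ 2 := by
    rw [← hirotaDeriv_swap]
    exact deriv_div_eq_hirotaDeriv h₂y h₁y h₁
  linear_combination hY - hX

theorem pY_div_add_pX_pX_div (h₁x : ContDiffAt ℝ 2 (τ₁ · y) x) (h₂x : ContDiffAt ℝ 2 (τ₂ · y) x)
    (h₁y : DifferentiableAt ℝ (τ₁ x) y) (h₂y : DifferentiableAt ℝ (τ₂ x) y) (h₂ : τ₂ x y ≠ 0) :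
    pY (fun a b => τ₁ a b / τ₂ a b) x y + pX (pX fun a b => τ₁ a b / τ₂ a b) x y
      = -(τ₁ x y / τ₂ x y * (2 * pX (pX fun a b => Real.log (τ₂ a b)) x y))
        + (hirotaDeriv₂ (τ₁ · y) (τ₂ · y) x + hirotaDeriv (τ₁ x) (τ₂ x) y) / τ₂ x y ^ 2 := by
  have hX : pX (pX fun a b => τ₁ a b / τ₂ a b) x y
        + τ₁ x y / τ₂ x y * (2 * pX (pX fun a b => Real.log (τ₂ a b)) x y)
      = hirotaDeriv₂ (τ₁ · y) (τ₂ · y) x / τ₂ x y ^ 2 := by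
    rw [hirotaDeriv₂_comm]
    exact deriv_deriv_div_add_log h₂x h₁x h₂
  have hY : pY (fun a b => τ₁ a b / τ₂ a b) x y = hirotaDeriv (τ₁ x) (τ₂ x) y / τ₂ x y ^ 2 :=
    deriv_div_eq_hirotaDeriv h₁y h₂y h₂
  linear_combination hY + hX

-- `Real.log` is `log |·|`, so `2 ∂ₓ² log |τ|` is the potential of `τ` whatever its sign.
theorem backlund_ratio_heat_identities_general
    (h₁x : ContDiffAt ℝ 2 (τ₁ · y) x) (h₂x : ContDiffAt ℝ 2 (τ₂ · y) x)
    (h₁y : DifferentiableAt ℝ (τ₁ x) y) (h₂y : DifferentiableAt ℝ (τ₂ x) y)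
    (h₁ : τ₁ x y ≠ 0) (h₂ : τ₂ x y ≠ 0)
    (hBT : τ₁ x y * pX (pX τ₂) x y - 2 * pX τ₁ x y * pX τ₂ x y
        + τ₂ x y * pX (pX τ₁) x y + τ₂ x y * pY τ₁ x y - τ₁ x y * pY τ₂ x y = 0) :
    (pY (fun a b => τ₂ a b / τ₁ a b) x y - pX (pX fun a b => τ₂ a b / τ₁ a b) x y
        = (τ₂ x y / τ₁ x y) * (2 * pX (pX fun a b => Real.log (τ₁ a b)) x y))
    ∧ (pY (fun a b => (τ₂ a b / τ₁ a b)⁻¹) x y + pX (pX fun a b => (τ₂ a b / τ₁ a b)⁻¹) x y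
        = -((τ₂ x y / τ₁ x y)⁻¹ * (2 * pX (pX fun a b => Real.log (τ₂ a b)) x y))) := by
  have hirota : hirotaDeriv₂ (τ₁ · y) (τ₂ · y) x + hirotaDeriv (τ₁ x) (τ₂ x) y = 0 := by
    simp only [pX, pY] at hBT
    unfold hirotaDeriv₂ hirotaDeriv
    linear_combination hBT
  simp only [inv_div]
  rw [pY_div_sub_pX_pX_div h₁x h₂x h₁y h₂y h₁, pY_div_add_pX_pX_div h₁x h₂x h₁y h₂y h₂, hirota]
  simp only [zero_div, sub_zero, add_zero, and_self]

end Backlund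

/-- heat-operator intertwining identities for the ratio
h = τ₂/τ₁ of Bäcklund-related τ-functions. -/
theorem backlund_ratio_heat_identities
    (τ₁ τ₂ : ℝ → ℝ → ℝ)
    (hτ₁ : ContDiff ℝ (⊤ : ℕ∞) fun p : ℝ × ℝ => τ₁ p.1 p.2)
    (hτ₂ : ContDiff ℝ (⊤ : ℕ∞) fun p : ℝ × ℝ => τ₂ p.1 p.2)
    (hpos₁ : ∀ x y, 0 < τ₁ x y) (hpos₂ : ∀ x y, 0 < τ₂ x y)
    (hBT : ∀ x y,
      τ₁ x y * pX (pX τ₂) x y - 2 * pX τ₁ x y * pX τ₂ x y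
        + τ₂ x y * pX (pX τ₁) x y + τ₂ x y * pY τ₁ x y - τ₁ x y * pY τ₂ x y = 0) :
    (∀ x y, pY (fun a b => τ₂ a b / τ₁ a b) x y
          - pX (pX fun a b => τ₂ a b / τ₁ a b) x y
        = (τ₂ x y / τ₁ x y) * (2 * pX (pX fun a b => Real.log (τ₁ a b)) x y))
    ∧ (∀ x y, pY (fun a b => (τ₂ a b / τ₁ a b)⁻¹) x y
          + pX (pX fun a b => (τ₂ a b / τ₁ a b)⁻¹) x y
        = -((τ₂ x y / τ₁ x y)⁻¹
            * (2 * pX (pX fun a b => Real.log (τ₂ a b)) x y))) := by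
  have hτ₁C2 := contDiff_infty.1 hτ₁ 2
  have hτ₂C2 := contDiff_infty.1 hτ₂ 2
  have heat (x y : ℝ) := backlund_ratio_heat_identities_general
    (contDiff_slice_left hτ₁C2 y).contDiffAt (contDiff_slice_left hτ₂C2 y).contDiffAt
    ((contDiff_slice_right hτ₁C2 x).differentiable two_ne_zero y)
    ((contDiff_slice_right hτ₂C2 x).differentiable two_ne_zero y)
    (hpos₁ x y).ne' (hpos₂ x y).ne' (hBT x y)
  exact ⟨fun x y => (heat x y).1, fun x y => (heat x y).2⟩
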